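/- Let n ≥ 1, let C ∈ M_n(ℝ) satisfy CᵀC = 1, and let r ∈ ℝⁿ. Put g = ι(C, r) ∈ M_{n+1}(ℝ). Then for all matrices ξ, η ∈ M_{n+1}(ℝ) whose (n+1)-st (last) row is zero, tr((gξ)ᵀ(gη)) = tr(ξᵀη). (This says that left translation by ι(C, r) preserves the Frobenius inner product on the tangent spaces of ι(SE(n)) ⊂ ℝ^{(n+1)²}; hence ι is an isometric imbedding of SE(n), with the left-invariant metric, into the Euclidean space ℝ^{(n+1)²}.) -/

import Mathlib

open Matrix

noncomputable section

/-- The imbedding `ι(C, r) = [[C, r], [0, 1]]` of `M_n(ℝ) × ℝⁿ` into `M_{n+1}(ℝ)`. -/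
def iotaSE (n : ℕ) (C : Matrix (Fin n) (Fin n) ℝ) (r : Fin n → ℝ) :
    Matrix (Fin (n + 1)) (Fin (n + 1)) ℝ :=
  Matrix.of fun a b =>
    if ha : (a : ℕ) < n then
      if hb : (b : ℕ) < n then C ⟨a, ha⟩ ⟨b, hb⟩ else r ⟨a, ha⟩
    else if (b : ℕ) < n then 0 else 1

lemma iotaSE_aux (n : ℕ) (X Y : Matrix (Fin (n + 1)) (Fin (n + 1)) ℝ)
    (hX : ∀ b, X (Fin.last n) b = 0) :
    Xᵀ * Y = (X.submatrix Fin.castSucc id)ᵀ * (Y.submatrix Fin.castSucc id) := by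
  ext a b
  simp [Matrix.mul_apply, Fin.sum_univ_castSucc, hX]

lemma iotaSE_top (n : ℕ) (C : Matrix (Fin n) (Fin n) ℝ) (r : Fin n → ℝ)
    (X : Matrix (Fin (n + 1)) (Fin (n + 1)) ℝ) (hX : ∀ b, X (Fin.last n) b = 0) :
    (iotaSE n C r * X).submatrix Fin.castSucc id = C * X.submatrix Fin.castSucc id := by
  ext a b
  simp [Matrix.mul_apply, Fin.sum_univ_castSucc, hX, iotaSE]

lemma iotaSE_bot (n : ℕ) (C : Matrix (Fin n) (Fin n) ℝ) (r : Fin n → ℝ)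
    (X : Matrix (Fin (n + 1)) (Fin (n + 1)) ℝ) (hX : ∀ b, X (Fin.last n) b = 0) (b) :
    (iotaSE n C r * X) (Fin.last n) b = 0 := by
  simp [Matrix.mul_apply, Fin.sum_univ_castSucc, hX, iotaSE]

/-- Let `CᵀC = 1`, `r ∈ ℝⁿ` and `g = ι(C, r)`.  Then for all `ξ, η ∈ M_{n+1}(ℝ)` whose last
row is zero, `tr((gξ)ᵀ(gη)) = tr(ξᵀη)`: left translation by `ι(C, r)` preserves the Frobenius
inner product on the tangent spaces of `ι(SE(n)) ⊂ ℝ^{(n+1)²}`, hence `ι` is an isometric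
imbedding of `SE(n)` into Euclidean space. -/
theorem statement14 (n : ℕ) (hn : 1 ≤ n)
    (C : Matrix (Fin n) (Fin n) ℝ) (hC : Cᵀ * C = 1) (r : Fin n → ℝ)
    (ξ η : Matrix (Fin (n + 1)) (Fin (n + 1)) ℝ)
    (hξ : ∀ b, ξ (Fin.last n) b = 0) (hη : ∀ b, η (Fin.last n) b = 0) :
    Matrix.trace ((iotaSE n C r * ξ)ᵀ * (iotaSE n C r * η)) = Matrix.trace (ξᵀ * η) := by
  rw [iotaSE_aux n _ _ (iotaSE_bot n C r ξ hξ), iotaSE_top n C r ξ hξ, iotaSE_top n C r η hη,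
    iotaSE_aux n ξ η hξ, Matrix.transpose_mul, Matrix.mul_assoc, ← Matrix.mul_assoc Cᵀ, hC,
    Matrix.one_mul]
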